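/- (Coarse König Theorem) Let X be a connected length space of infinite diameter. Then X has either the ray R or the graph ∨Pₙ as an asymptotic minor. -/

import Mathlib

/-! Fix a base point `o` and look at the components of the complements of balls around `o`.

If every unbounded component outside a ball contains an unbounded component outside each larger
ball, there is a nested sequence of unbounded components, with radii as sparse as desired.
Joining points of consecutive ones inside them gives a sequence of curves tending to infinity such
that non-consecutive curves are `K`-far apart. Using the curves alternately as branch sets and as
places for the branch paths gives a `K`-fat ray (`ray_case`).

Otherwise some unbounded set of points meets only bounded components outside some ball. Almost
shortest curves from `o` to points of this set in infinitely many different components, of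
increasing distance from `o`, are far apart from each other outside a slightly larger ball. With a
ball as the central branch set, they give a `K`-fat `∨Pₙ` (`vee_case`).

In both cases the branch paths have to be arcs meeting the branch sets in their end points only.
They are obtained in `arc_between` as shortest curves between two closed sets inside the compact
image of a rectifiable curve, and `hasMetricFatMinor_of_curves` reduces the construction of fat minors
to that of curves. Rectifiable curves are handled through `1`-Lipschitz parametrisations, provided by
`exists_oneLip`.
-/


/-- A metric space is a length space if any two points are joined by paths of length
arbitrarily close to their distance. -/
def IsLengthSpace (X : Type*) [MetricSpace X] : Prop :=
  ∀ x y : X, ∀ ε : ℝ, 0 < ε → ∃ p : Path x y,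
    eVariationOn (fun t => p t) Set.univ ≤ ENNReal.ofReal (dist x y + ε)
/-- `S` is an arc from `a` to `b`: the image of an injective path. -/
def IsArcIn {X : Type*} [TopologicalSpace X] (S : Set X) (a b : X) : Prop :=
  ∃ p : Path a b, Function.Injective (fun t => p t) ∧ Set.range (fun t => p t) = S

/-- A metric space `X` has the graph `H` as a `K`-fat minor: there are pairwise disjoint
connected branch sets `B v` and pairwise disjoint branch arcs `P e`, each branch arc meeting
the union of the branch sets exactly at its two endpoints (lying in the branch sets of the
endvertices of the corresponding edge), such that any two of these sets are at distance
at least `K` unless they are equal or an incident branch set/branch arc pair. -/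
def HasMetricFatMinor {W : Type*} (H : SimpleGraph W) (X : Type*) [MetricSpace X]
    (K : ℝ) : Prop :=
  ∃ (B : W → Set X) (P : Sym2 W → Set X),
    (∀ v, IsConnected (B v)) ∧
    (∀ v v', v ≠ v' → Disjoint (B v) (B v')) ∧
    (∀ u w, H.Adj u w → ∃ a ∈ B u, ∃ b ∈ B w,
        IsArcIn (P s(u, w)) a b ∧ P s(u, w) ∩ (⋃ v, B v) = {a, b}) ∧
    (∀ e ∈ H.edgeSet, ∀ e' ∈ H.edgeSet, e ≠ e' → Disjoint (P e) (P e')) ∧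
    (∀ v v', v ≠ v' → ∀ x ∈ B v, ∀ y ∈ B v', K ≤ dist x y) ∧
    (∀ e ∈ H.edgeSet, ∀ e' ∈ H.edgeSet, e ≠ e' → ∀ x ∈ P e, ∀ y ∈ P e', K ≤ dist x y) ∧
    (∀ u w, H.Adj u w → ∀ v, v ≠ u → v ≠ w → ∀ x ∈ P s(u, w), ∀ y ∈ B v, K ≤ dist x y)

/-- `X` has `H` as an asymptotic minor if it has a `K`-fat `H`-minor for every `K > 0`. -/
def HasAsymptoticMinor {W : Type*} (H : SimpleGraph W) (X : Type*) [MetricSpace X] : Prop :=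
  ∀ K : ℝ, 0 < K → HasMetricFatMinor H X K
/-- The ray: the one-way infinite path on `ℕ`. -/
def rayGraph : SimpleGraph ℕ := SimpleGraph.fromRel (fun a b => b = a + 1)

/-- The graph `∨Pₙ`, obtained from the disjoint union of the paths `P₁, P₂, P₃, …`
(where `Pₙ` has length `n`) by identifying the first vertex of each path to a single
centre vertex.  The vertex `Sum.inr ⟨n, i⟩` is the `(i+1)`-st vertex of the path of
length `n + 1`. -/
def veeGraph : SimpleGraph (Unit ⊕ (Σ n : ℕ, Fin (n + 1))) :=
  SimpleGraph.fromRel (fun a b =>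
    (∃ n : ℕ, a = Sum.inl () ∧ b = Sum.inr ⟨n, 0⟩) ∨
    (∃ (n : ℕ) (i j : Fin (n + 1)), a = Sum.inr ⟨n, i⟩ ∧ b = Sum.inr ⟨n, j⟩ ∧
      (j : ℕ) = (i : ℕ) + 1))

/-! ### Rectifiable curves as `1`-Lipschitz maps -/

/-- `g` is `1`-Lipschitz. Rectifiable curves of length at most `L` are encoded as restrictions to
`[0, L]` of such maps on the whole line, which makes cutting and concatenating easy. -/
def OneLip {X : Type*} [MetricSpace X] (g : ℝ → X) : Prop :=
  ∀ s t, dist (g s) (g t) ≤ |s - t|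

section
variable {X : Type*} [MetricSpace X]

lemma OneLip.continuous {g : ℝ → X} (hg : OneLip g) : Continuous g :=
  (LipschitzWith.of_dist_le_mul (K := 1) (fun s t => by
    simpa [Real.dist_eq] using hg s t)).continuous

lemma OneLip.shift {g : ℝ → X} (hg : OneLip g) (c : ℝ) : OneLip (fun s => g (s + c)) := by
  intro s t
  simpa using hg (s + c) (t + c)

/-- Following `g` up to time `a` and then `h` from time `b` on. This serves both for
concatenating curves and, with `h = g`, for cutting a loop out of a curve. -/
lemma OneLip.glue {g h : ℝ → X} (hg : OneLip g) (hh : OneLip h) {a b : ℝ} (hab : g a = h b) :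
    OneLip (fun u => if u ≤ a then g u else h (u - a + b)) := by
  have key : ∀ s t : ℝ, s ≤ a → a < t → dist (g s) (h (t - a + b)) ≤ t - s := by
    intro s t hs ht
    have h1 := hg s a
    have h2 := hh b (t - a + b)
    rw [abs_of_nonpos (by linarith)] at h1 h2
    have h3 := dist_triangle (g s) (g a) (h (t - a + b))
    rw [hab] at h1 h3
    linarith
  intro s t
  by_cases hs : s ≤ a <;> by_cases ht : t ≤ a <;> simp only [hs, ht, if_true, if_false]
  · exact hg s t
  · rw [abs_sub_comm]
    exact (key s t hs (not_le.1 ht)).trans (le_abs_self _)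
  · rw [dist_comm]
    exact (key t s ht (not_le.1 hs)).trans (le_abs_self _)
  · have := hh (s - a + b) (t - a + b)
    convert this using 2
    ring

lemma OneLip.clamp {g : ℝ → X} (hg : OneLip g) (a b : ℝ) :
    OneLip (fun s => g (max a (min b s))) := by
  intro s t
  refine (hg _ _).trans ((abs_max_sub_max_le_max a (min b s) a (min b t)).trans ?_)
  refine max_le (by simp) ((abs_min_sub_min_le_max b s b t).trans ?_)
  simp

/-- In a length space, points are joined by `1`-Lipschitz curves on intervals of length close to
their distance. For a path `f` of finite variation, `φ t` denotes the variation on `[0, t]` plus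
`η * t`, which is strictly increasing but not known to be continuous; the curve is `f ∘ ψ` for
the generalised inverse `ψ s = sup {t | φ t ≤ s}`, and it is `1`-Lipschitz since `f` is continuous
and its increments are bounded by those of `φ`. -/
lemma exists_oneLip (hX : IsLengthSpace X) (x y : X) {ε : ℝ} (hε : 0 < ε) :
    ∃ (g : ℝ → X) (L : ℝ), OneLip g ∧ 0 ≤ L ∧ L ≤ dist x y + ε ∧ g 0 = x ∧ g L = y := by
  obtain ⟨p, hp⟩ := hX x y (ε / 2) (half_pos hε)
  set η := ε / 2 with hη
  have hη0 : 0 < η := half_pos hε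
  set f : unitInterval → X := fun t => p t with hf
  have hfin : ∀ s : Set unitInterval, eVariationOn f s ≠ ⊤ := fun s =>
    ne_top_of_le_ne_top ENNReal.ofReal_ne_top ((eVariationOn.mono f (Set.subset_univ s)).trans hp)
  set φ : unitInterval → ℝ := fun t => (eVariationOn f (Set.Iic t)).toReal + η * t with hφ
  have hφ0 : φ 0 = 0 := by
    have : (Set.Iic (0 : unitInterval)).Subsingleton := by
      intro a ha b hb
      exact (le_antisymm ha bot_le).trans (le_antisymm hb bot_le).symm
    simp [hφ, eVariationOn.subsingleton f this]
  have hφ1 : φ 1 ≤ dist x y + ε := by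
    have h1 : (eVariationOn f (Set.Iic 1)).toReal ≤ dist x y + ε / 2 := by
      apply ENNReal.toReal_le_of_le_ofReal (by positivity)
      exact (eVariationOn.mono f (Set.subset_univ _)).trans hp
    simp only [hφ, Set.Icc.coe_one, mul_one]
    linarith
  have hstep : ∀ u v : unitInterval, u ≤ v → dist (f u) (f v) + η * (v - u) ≤ φ v - φ u := by
    intro u v huv
    have h1 : eVariationOn f (Set.Iic u) + eVariationOn f (Set.Icc u v)
        ≤ eVariationOn f (Set.Iic v) := by
      refine (eVariationOn.add_le_union f (fun a ha b hb => le_trans ha hb.1)).trans ?_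
      exact eVariationOn.mono f (Set.union_subset (Set.Iic_subset_Iic.2 huv)
        (fun a ha => ha.2))
    have h2 : edist (f u) (f v) ≤ eVariationOn f (Set.Icc u v) :=
      eVariationOn.edist_le f (Set.left_mem_Icc.2 huv) (Set.right_mem_Icc.2 huv)
    have h3 : eVariationOn f (Set.Iic u) + edist (f u) (f v) ≤ eVariationOn f (Set.Iic v) :=
      le_trans (by gcongr) h1
    have h4 := ENNReal.toReal_mono (hfin _) h3
    rw [ENNReal.toReal_add (hfin _) (edist_ne_top _ _), ← dist_edist] at h4
    simp only [hφ]
    linarith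
  have hmono : ∀ u v : unitInterval, u ≤ v → φ u ≤ φ v := by
    intro u v huv
    have h1 := hstep u v huv
    have h2 : (0 : ℝ) ≤ η * (v - u) := mul_nonneg hη0.le (sub_nonneg.2 huv)
    have h3 := dist_nonneg (x := f u) (y := f v)
    linarith
  set ψ : ℝ → unitInterval := fun s => sSup {t | φ t ≤ s} with hψ
  have hψmono : Monotone ψ := fun s t hst => sSup_le_sSup (fun u hu => le_trans hu hst)
  have key : ∀ s t, s ≤ t → dist (f (ψ s)) (f (ψ t)) ≤ t - s := by
    intro s t hst
    rcases (hψmono hst).eq_or_lt with h | h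
    · rw [h, dist_self]; linarith
    have hm : ∀ u ∈ Set.Ioo (ψ s) (ψ t), ∀ v ∈ Set.Ioo (ψ s) (ψ t),
        dist (f u) (f v) ∈ Set.Iic (t - s) := by
      have hm' : ∀ u ∈ Set.Ioo (ψ s) (ψ t), ∀ v ∈ Set.Ioo (ψ s) (ψ t), u ≤ v →
          dist (f u) (f v) ≤ t - s := by
        intro u hu v hv huv
        have h1 : s < φ u := by
          by_contra hcon
          exact absurd (le_sSup (show u ∈ {t | φ t ≤ s} from not_lt.1 hcon)) (not_le.2 hu.1)
        obtain ⟨w, hw, hvw⟩ := lt_sSup_iff.1 hv.2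
        have h2 : φ v ≤ t := (hmono v w hvw.le).trans hw
        have h3 := hstep u v huv
        have h4 : (0 : ℝ) ≤ η * (v - u) := mul_nonneg hη0.le (sub_nonneg.2 huv)
        linarith
      intro u hu v hv
      rcases le_total u v with huv | huv
      · exact hm' u hu v hv huv
      · rw [Set.mem_Iic, dist_comm]; exact hm' v hv u hu huv
    -- The bound on the open interval extends to its end points by continuity of `f`.
    have hcl := closure_Ioo h.ne
    have := map_mem_closure₂ (f := fun u v => dist (f u) (f v)) (s := Set.Ioo (ψ s) (ψ t))
      (t := Set.Ioo (ψ s) (ψ t)) (u := Set.Iic (t - s))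
      (by unfold Function.uncurry; fun_prop)
      (hcl ▸ Set.left_mem_Icc.2 h.le) (hcl ▸ Set.right_mem_Icc.2 h.le) hm
    rwa [isClosed_Iic.closure_eq] at this
  have hφnn : 0 ≤ φ 1 := hφ0 ▸ hmono 0 1 bot_le
  refine ⟨fun s => f (ψ s), φ 1, ?_, hφnn, hφ1, ?_, ?_⟩
  · intro s t
    rcases le_total s t with h | h
    · rw [abs_sub_comm]; exact (key s t h).trans (le_abs_self _)
    · rw [dist_comm]; exact (key t s h).trans (le_abs_self _)
  · have : ψ 0 = 0 := by
      refine le_antisymm (sSup_le fun u hu => ?_) bot_le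
      have h1 := hstep 0 u bot_le
      have h2 := dist_nonneg (x := f 0) (y := f u)
      have hu' : φ u ≤ 0 := hu
      rw [hφ0] at h1
      simp only [Set.Icc.coe_zero, sub_zero] at h1
      have h3 : (u : ℝ) ≤ 0 := by
        by_contra hc
        have := mul_pos hη0 (not_le.1 hc)
        linarith
      exact h3
    simp [this, hf]
  · have : ψ (φ 1) = 1 := le_antisymm le_top (le_sSup (le_refl (φ 1)))
    simp [this, hf]

/-! ### Extracting arcs -/

/-- `g` restricted to `[0, L]` is a `1`-Lipschitz curve from `E` to `F`, and `g` maps into `A`. -/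
def IsJoining (A E F : Set X) (L : ℝ) (g : ℝ → X) : Prop :=
  0 ≤ L ∧ OneLip g ∧ (∀ t, g t ∈ A) ∧ g 0 ∈ E ∧ g L ∈ F

/-- Within a compact set there is a shortest curve between two closed sets. The pairs `(L, g)`
form a closed subset of a product of compact spaces (with the product topology on functions), by
Tychonoff's theorem a compact one, on which `L` attains its minimum. -/
lemma exists_shortest {A E F : Set X} (hA : IsCompact A) (hE : IsClosed E) (hF : IsClosed F)
    {L₀ : ℝ} {g₀ : ℝ → X} (h₀ : IsJoining A E F L₀ g₀) :
    ∃ L g, IsJoining A E F L g ∧ ∀ L' g', IsJoining A E F L' g' → L ≤ L' := by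
  have hFne : F.Nonempty := ⟨_, h₀.2.2.2.2⟩
  -- The last condition is equivalent to `g L ∈ F` for `1`-Lipschitz `g`, and it is visibly closed
  -- for the product topology because each instance evaluates `g` at a fixed time only.
  set S : Set (ℝ × (ℝ → X)) :=
    {q | (∀ s t, dist (q.2 s) (q.2 t) ≤ |s - t|) ∧ q.2 0 ∈ E ∧
      ∀ s, Metric.infDist (q.2 s) F ≤ |s - q.1|} with hS
  have hSc : IsClosed S := by
    refine IsClosed.and ?_ (IsClosed.and ?_ ?_)
    · simp only [Set.ofPred_forall]
      refine isClosed_iInter fun s => isClosed_iInter fun t => isClosed_le (by fun_prop) (by fun_prop)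
    · exact hE.preimage (by fun_prop : Continuous fun q : ℝ × (ℝ → X) => q.2 0)
    · simp only [Set.ofPred_forall]
      refine isClosed_iInter fun s => isClosed_le ?_ (by fun_prop)
      exact (Metric.continuous_infDist_pt F).comp (by fun_prop)
  have hmem : ∀ L g, 0 ≤ L → L ≤ L₀ → IsJoining A E F L g →
      (L, g) ∈ (Set.Icc 0 L₀ ×ˢ Set.pi Set.univ (fun _ : ℝ => A)) ∩ S := by
    rintro L g h0 h1 ⟨-, h2, h3, h4, h5⟩
    refine ⟨⟨⟨h0, h1⟩, fun t _ => h3 t⟩, h2, h4, fun s => ?_⟩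
    exact (Metric.infDist_le_dist_of_mem h5).trans (h2 _ _)
  have hcomp : IsCompact ((Set.Icc 0 L₀ ×ˢ Set.pi Set.univ (fun _ : ℝ => A)) ∩ S) :=
    (isCompact_Icc.prod (isCompact_univ_pi fun _ => hA)).inter_right hSc
  obtain ⟨⟨L, g⟩, ⟨⟨⟨hL0, hL1⟩, hgA⟩, hg1, hg2, hg3⟩, hmin⟩ :=
    hcomp.exists_isMinOn ⟨_, hmem L₀ g₀ h₀.1 le_rfl h₀⟩ continuous_fst.continuousOn
  refine ⟨L, g, ⟨hL0, hg1, fun t => hgA t trivial, hg2, ?_⟩, ?_⟩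
  · rw [hF.mem_iff_infDist_zero hFne]
    exact le_antisymm (by simpa using hg3 L) Metric.infDist_nonneg
  · intro L' g' h'
    rcases le_total L' L₀ with h | h
    · exact hmin (hmem L' g' h'.1 h h')
    · exact hL1.trans h

/-- A curve between disjoint closed sets `E` and `F` contains an arc from `E` to `F` meeting them
only in its ends, namely a shortest curve from `E` to `F` inside its image: a repeated value, or a
further point in `E` or `F`, would allow a shortcut. -/
lemma arc_between {E F : Set X} (hE : IsClosed E) (hF : IsClosed F) (hEF : Disjoint E F)
    {g : ℝ → X} (hg : OneLip g) {a b : ℝ} (hab : a ≤ b) (ha : g a ∈ E) (hb : g b ∈ F) :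
    ∃ S x y, S ⊆ g '' Set.Icc a b ∧ IsArcIn S x y ∧ x ∈ E ∧ y ∈ F ∧ S ∩ E = {x} ∧ S ∩ F = {y} := by
  have h₀ : IsJoining (g '' Set.Icc a b) E F (b - a)
      (fun s => g (max a (min b (s + a)))) := by
    refine ⟨by linarith, (hg.clamp a b).shift a, fun t => ⟨_, ?_, rfl⟩, ?_, ?_⟩
    · exact ⟨le_max_left _ _, max_le hab (min_le_left _ _)⟩
    · simpa [hab] using ha
    · simpa [hab] using hb
  obtain ⟨L, h, ⟨hL, hh, hhA, hhE, hhF⟩, hmin⟩ :=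
    exists_shortest (isCompact_Icc.image hg.continuous) hE hF h₀
  have hLpos : 0 < L := by
    refine lt_of_le_of_ne hL fun hc => ?_
    rw [← hc] at hhF
    exact Set.disjoint_left.1 hEF hhE hhF
  have hinj : ∀ s t, 0 ≤ s → s < t → t ≤ L → h s ≠ h t := by
    intro s t hs hst htL heq
    have := hmin (L - (t - s)) _ ⟨by linarith, hh.glue hh heq, ?_, ?_, ?_⟩
    · linarith
    · intro u
      split_ifs <;> exact hhA _
    · simpa [hs] using hhE
    · split_ifs with hc
      · have : t = L := by linarith
        have h2 : L - (t - s) = s := by linarith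
        rw [h2, heq, this]; exact hhF
      · convert hhF using 2; ring
  have hfirst : ∀ t, 0 ≤ t → t ≤ L → h t ∈ E → t = 0 := by
    intro t ht0 htL ht
    have := hmin (L - t) _ ⟨by linarith, hh.shift t, fun u => hhA _, by simpa using ht,
      by simpa using hhF⟩
    linarith
  have hlast : ∀ t, 0 ≤ t → t ≤ L → h t ∈ F → t = L := by
    intro t ht0 htL ht
    have := hmin t h ⟨ht0, hh, hhA, hhE, ht⟩
    linarith
  have hr : ∀ t : unitInterval, 0 ≤ L * (t : ℝ) ∧ L * (t : ℝ) ≤ L := fun t =>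
    ⟨mul_nonneg hL t.2.1, mul_le_of_le_one_right hL t.2.2⟩
  let p : Path (h 0) (h L) :=
    { toFun := fun t => h (L * (t : ℝ))
      continuous_toFun := hh.continuous.comp (by fun_prop)
      source' := by simp
      target' := by simp }
  refine ⟨Set.range (fun t => p t), h 0, h L, ?_, ⟨p, ?_, rfl⟩, hhE, hhF, ?_, ?_⟩
  · rintro _ ⟨t, rfl⟩
    exact hhA _
  · intro s t hst
    have hst' : h (L * s) = h (L * t) := hst
    have : L * (s : ℝ) = L * t := by
      rcases lt_trichotomy (L * (s : ℝ)) (L * t) with hc | hc | hc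
      · exact absurd hst' (hinj _ _ (hr s).1 hc (hr t).2)
      · exact hc
      · exact absurd hst'.symm (hinj _ _ (hr t).1 hc (hr s).2)
    exact Subtype.ext (mul_left_cancel₀ hLpos.ne' this)
  · apply Set.Subset.antisymm
    · rintro _ ⟨⟨t, rfl⟩, ht⟩
      change h (L * t) ∈ E at ht
      change h (L * t) = h 0
      rw [hfirst _ (hr t).1 (hr t).2 ht]
    · rintro _ rfl
      exact ⟨⟨0, p.source⟩, hhE⟩
  · apply Set.Subset.antisymm
    · rintro _ ⟨⟨t, rfl⟩, ht⟩
      change h (L * t) ∈ F at ht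
      change h (L * t) = h L
      rw [hlast _ (hr t).1 (hr t).2 ht]
    · rintro _ rfl
      exact ⟨⟨1, p.target⟩, hhF⟩

end

/-! ### Fat minors from families of curves -/

section
variable {X : Type*} [MetricSpace X]

lemma IsArcIn.symm {S : Set X} {a b : X} (h : IsArcIn S a b) : IsArcIn S b a := by
  obtain ⟨p, hp, rfl⟩ := h
  refine ⟨p.symm, fun s t hst => ?_, ?_⟩
  · exact unitInterval.symm_bijective.injective (hp hst)
  · exact p.symm_range

/-- A criterion for fat minors that does not mention arcs: it suffices to have closed connected
branch sets `B v`, and for each edge a region `A e` containing a `1`-Lipschitz curve between the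
two branch sets, such that non-incident regions and branch sets are `K`-far apart. The branch
paths are the arcs that `arc_between` finds in the regions; they meet no other branch set since
those are at distance at least `K > 0`. -/
lemma hasMetricFatMinor_of_curves {W : Type*} {H : SimpleGraph W} {K : ℝ} (hK : 0 < K)
    (B : W → Set X) (A : Sym2 W → Set X)
    (hBconn : ∀ v, IsConnected (B v)) (hBcl : ∀ v, IsClosed (B v))
    (hcurve : ∀ e ∈ H.edgeSet, ∃ u w, e = s(u, w) ∧ ∃ (g : ℝ → X) (a b : ℝ), OneLip g ∧ a ≤ b ∧
      g a ∈ B u ∧ g b ∈ B w ∧ g '' Set.Icc a b ⊆ A e)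
    (hBB : ∀ v v', v ≠ v' → ∀ x ∈ B v, ∀ y ∈ B v', K ≤ dist x y)
    (hAA : ∀ e ∈ H.edgeSet, ∀ e' ∈ H.edgeSet, e ≠ e' → ∀ x ∈ A e, ∀ y ∈ A e', K ≤ dist x y)
    (hAB : ∀ e ∈ H.edgeSet, ∀ v, v ∉ e → ∀ x ∈ A e, ∀ y ∈ B v, K ≤ dist x y) :
    HasMetricFatMinor H X K := by
  have hdisj : ∀ S T : Set X, (∀ x ∈ S, ∀ y ∈ T, K ≤ dist x y) → Disjoint S T := by
    intro S T h
    refine Set.disjoint_left.2 fun x hx hx' => ?_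
    have := h x hx x hx'
    rw [dist_self] at this
    linarith
  have hP : ∀ e : Sym2 W, ∃ S : Set X, e ∈ H.edgeSet → S ⊆ A e ∧ ∃ u w, e = s(u, w) ∧
      ∃ a b, IsArcIn S a b ∧ a ∈ B u ∧ b ∈ B w ∧ S ∩ B u = {a} ∧ S ∩ B w = {b} := by
    intro e
    by_cases he : e ∈ H.edgeSet
    · obtain ⟨u, w, rfl, g, a, b, hg, hab, ha, hb, hsub⟩ := hcurve e he
      have huw : u ≠ w := H.ne_of_adj he
      obtain ⟨S, x, y, h1, h2, h3, h4, h5, h6⟩ :=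
        arc_between (hBcl u) (hBcl w) (hdisj _ _ (hBB u w huw)) hg hab ha hb
      exact ⟨S, fun _ => ⟨h1.trans hsub, u, w, rfl, x, y, h2, h3, h4, h5, h6⟩⟩
    · exact ⟨∅, fun h => absurd h he⟩
  choose P hP using hP
  refine ⟨B, P, hBconn, fun v v' h => hdisj _ _ (hBB v v' h), ?_, ?_, hBB, ?_, ?_⟩
  · intro u w huw
    obtain ⟨hsub, u', w', he, a, b, harc, ha, hb, hPa, hPb⟩ := hP s(u, w) huw
    have hinter : P s(u, w) ∩ ⋃ v, B v = {a, b} := by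
      apply Set.Subset.antisymm
      · rintro x ⟨hx, hxB⟩
        obtain ⟨v, hv⟩ := Set.mem_iUnion.1 hxB
        by_cases hvu : v = u'
        · exact Or.inl (hPa.subset ⟨hx, hvu ▸ hv⟩)
        by_cases hvw : v = w'
        · exact Or.inr (hPb.subset ⟨hx, hvw ▸ hv⟩)
        have := hAB s(u, w) huw v (by rw [he]; simp [hvu, hvw]) x (hsub hx) x hv
        rw [dist_self] at this
        linarith
      · rintro x (rfl | rfl)
        · exact ⟨(hPa.symm.subset rfl).1, Set.mem_iUnion.2 ⟨u', ha⟩⟩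
        · exact ⟨(hPb.symm.subset rfl).1, Set.mem_iUnion.2 ⟨w', hb⟩⟩
    rcases Sym2.eq_iff.1 he with ⟨rfl, rfl⟩ | ⟨rfl, rfl⟩
    · exact ⟨a, ha, b, hb, harc, hinter⟩
    · exact ⟨b, hb, a, ha, harc.symm, hinter.trans (Set.pair_comm a b)⟩
  · intro e he e' he' hne
    exact (hdisj _ _ (hAA e he e' he' hne)).mono (hP e he).1 (hP e' he').1
  · intro e he e' he' hne x hx y hy
    exact hAA e he e' he' hne x ((hP e he).1 hx) y ((hP e' he').1 hy)
  · intro u w huw v hvu hvw x hx y hy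
    exact hAB _ huw v (by simp [hvu, hvw]) x ((hP _ huw).1 hx) y hy

lemma OneLip.isClosed_image {g : ℝ → X} (hg : OneLip g) (a b : ℝ) :
    IsClosed (g '' Set.Icc a b) :=
  (isCompact_Icc.image hg.continuous).isClosed

lemma OneLip.isConnected_image {g : ℝ → X} (hg : OneLip g) {a b : ℝ} (hab : a ≤ b) :
    IsConnected (g '' Set.Icc a b) :=
  (isConnected_Icc hab).image _ hg.continuous.continuousOn

/-- A sequence of consecutive curves, any two non-consecutive of which are `K`-far apart, gives a
`K`-fat ray: the even curves are the branch sets, the odd ones carry the branch paths. -/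
lemma hasMetricFatMinor_ray {K : ℝ} (hK : 0 < K) (g : ℕ → ℝ → X) (L : ℕ → ℝ)
    (hg : ∀ k, OneLip (g k)) (hL : ∀ k, 0 ≤ L k) (hchain : ∀ k, g k (L k) = g (k + 1) 0)
    (hfar : ∀ k l, k + 2 ≤ l → ∀ x ∈ g k '' Set.Icc 0 (L k), ∀ y ∈ g l '' Set.Icc 0 (L l),
      K ≤ dist x y) :
    HasMetricFatMinor rayGraph X K := by
  set C : ℕ → Set X := fun k => g k '' Set.Icc 0 (L k) with hC
  have hfar' : ∀ k l, k + 2 ≤ l ∨ l + 2 ≤ k → ∀ x ∈ C k, ∀ y ∈ C l, K ≤ dist x y := by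
    rintro k l (h | h) x hx y hy
    · exact hfar k l h x hx y hy
    · rw [dist_comm]; exact hfar l k h y hy x hx
  have hedge : ∀ e ∈ rayGraph.edgeSet, ∃ k, e = s(k, k + 1) := by
    intro e
    induction e with | _ u w
    rintro ⟨-, h | h⟩
    · obtain rfl : w = u + 1 := h
      exact ⟨u, rfl⟩
    · obtain rfl : u = w + 1 := h
      exact ⟨w, Sym2.eq_swap⟩
  refine hasMetricFatMinor_of_curves hK (fun k => C (2 * k))
    (fun e => {x | ∃ k, e = s(k, k + 1) ∧ x ∈ C (2 * k + 1)})
    (fun v => (hg _).isConnected_image (hL _)) (fun v => (hg _).isClosed_image _ _) ?_ ?_ ?_ ?_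
  · intro e he
    obtain ⟨k, rfl⟩ := hedge e he
    refine ⟨k, k + 1, rfl, g (2 * k + 1), 0, L (2 * k + 1), hg _, hL _, ?_, ?_, ?_⟩
    · exact ⟨L (2 * k), ⟨hL _, le_rfl⟩, hchain _⟩
    · exact ⟨0, ⟨le_rfl, hL _⟩, (hchain _).symm⟩
    · intro x hx
      exact ⟨k, rfl, hx⟩
  · intro v v' hne
    exact hfar' _ _ (by omega)
  · rintro e - e' - hne x ⟨k, rfl, hx⟩ y ⟨l, rfl, hy⟩
    have : k ≠ l := by rintro rfl; exact hne rfl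
    exact hfar' _ _ (by omega) x hx y hy
  · rintro e - v hv x ⟨k, rfl, hx⟩ y hy
    simp only [Sym2.mem_iff, not_or] at hv
    exact hfar' _ _ (by omega) x hx y hy

/-- Curves `g n` leaving a central set `U` give a `K`-fat `∨Pₙ`. The `n`-th curve is cut at the
times `τ k` into pieces; piece `2 * (i + 1)` is the branch set of the `(i + 1)`-st vertex of its leg,
and piece `2 * k + 1` carries the branch path of the edge between the `k`-th and the `(k + 1)`-st
vertex, the `0`-th vertex being the centre, with branch set `U`. Only the pieces
`1, …, 2 * n + 2` of the `n`-th curve are used. -/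
lemma hasMetricFatMinor_vee {K : ℝ} (hK : 0 < K) (U : Set X) (hUconn : IsConnected U)
    (hUcl : IsClosed U) (g : ℕ → ℝ → X) (τ : ℕ → ℝ) (hτ : Monotone τ) (hg : ∀ n, OneLip (g n))
    (hstart : ∀ n, g n (τ 1) ∈ U)
    (hU : ∀ n k, 2 ≤ k → k ≤ 2 * n + 2 → ∀ x ∈ U,
      ∀ y ∈ g n '' Set.Icc (τ k) (τ (k + 1)), K ≤ dist x y)
    (hleg : ∀ n k l, 1 ≤ k → k + 2 ≤ l → l ≤ 2 * n + 2 →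
      ∀ x ∈ g n '' Set.Icc (τ k) (τ (k + 1)),
      ∀ y ∈ g n '' Set.Icc (τ l) (τ (l + 1)), K ≤ dist x y)
    (hlegs : ∀ n m k l, n < m → 1 ≤ k → k ≤ 2 * n + 2 → 1 ≤ l → l ≤ 2 * m + 2 →
      ∀ x ∈ g n '' Set.Icc (τ k) (τ (k + 1)),
      ∀ y ∈ g m '' Set.Icc (τ l) (τ (l + 1)), K ≤ dist x y) :
    HasMetricFatMinor veeGraph X K := by
  set C : ℕ → ℕ → Set X := fun n k => g n '' Set.Icc (τ k) (τ (k + 1)) with hC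
  have hfar : ∀ n m k l, 1 ≤ k → k ≤ 2 * n + 2 → 1 ≤ l → l ≤ 2 * m + 2 →
      (n = m → k + 2 ≤ l ∨ l + 2 ≤ k) → ∀ x ∈ C n k, ∀ y ∈ C m l, K ≤ dist x y := by
    intro n m k l hk hk' hl hl' h x hx y hy
    rcases lt_trichotomy n m with hnm | rfl | hnm
    · exact hlegs n m k l hnm hk hk' hl hl' x hx y hy
    · rcases h rfl with h | h
      · exact hleg n k l hk h hl' x hx y hy
      · rw [dist_comm]; exact hleg n l k hl h hk' y hy x hx
    · rw [dist_comm]; exact hlegs m n l k hnm hl hl' hk hk' y hy x hx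
  -- `node n k` is the `k`-th vertex along the `n`-th leg, with `node n 0` the centre;
  -- its value for `k > n + 1` is irrelevant.
  let node : ℕ → ℕ → Unit ⊕ (Σ n : ℕ, Fin (n + 1)) := fun n k =>
    if h : 0 < k ∧ k < n + 2 then Sum.inr ⟨n, ⟨k - 1, by omega⟩⟩ else Sum.inl ()
  have hnode0 : ∀ n, node n 0 = Sum.inl () := fun n => by simp [node]
  have hnode : ∀ n (i : Fin (n + 1)), node n (i + 1) = Sum.inr ⟨n, i⟩ := fun n i => by
    have := Nat.le_of_lt_succ i.2
    simp [node, this]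
  let B : Unit ⊕ (Σ n : ℕ, Fin (n + 1)) → Set X :=
    Sum.elim (fun _ => U) (fun v => C v.1 (2 * (v.2 + 1)))
  have hBnode : ∀ n k, 1 ≤ k → k ≤ n + 1 → B (node n k) = C n (2 * k) := by
    intro n k h1 h2
    obtain ⟨k, rfl⟩ := Nat.exists_eq_add_of_le' h1
    rw [hnode n ⟨k, by omega⟩]
    rfl
  have hedge : ∀ e ∈ veeGraph.edgeSet, ∃ n k, k ≤ n ∧ e = s(node n k, node n (k + 1)) := by
    have key : ∀ a b : Unit ⊕ (Σ n : ℕ, Fin (n + 1)),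
        ((∃ n : ℕ, a = Sum.inl () ∧ b = Sum.inr ⟨n, 0⟩) ∨
          (∃ (n : ℕ) (i j : Fin (n + 1)), a = Sum.inr ⟨n, i⟩ ∧ b = Sum.inr ⟨n, j⟩ ∧
            (j : ℕ) = (i : ℕ) + 1)) →
        ∃ n k, k ≤ n ∧ s(a, b) = s(node n k, node n (k + 1)) := by
      rintro a b (⟨n, rfl, rfl⟩ | ⟨n, i, j, rfl, rfl, hij⟩)
      · refine ⟨n, 0, Nat.zero_le _, ?_⟩
        rw [hnode0, ← hnode n 0]
        rfl
      · refine ⟨n, j, by omega, ?_⟩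
        rw [hnode, hij, hnode]
    intro e
    induction e with | _ u w
    rintro ⟨-, h | h⟩
    · exact key u w h
    · rw [Sym2.eq_swap]
      exact key w u h
  refine hasMetricFatMinor_of_curves hK B
    (fun e => {x | ∃ n k, k ≤ n ∧ e = s(node n k, node n (k + 1)) ∧ x ∈ C n (2 * k + 1)})
    ?_ ?_ ?_ ?_ ?_ ?_
  · rintro (_ | ⟨n, i⟩)
    · exact hUconn
    · exact (hg n).isConnected_image (hτ (Nat.le_succ _))
  · rintro (_ | ⟨n, i⟩)
    · exact hUcl
    · exact (hg n).isClosed_image _ _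
  · intro e he
    obtain ⟨n, k, hk, rfl⟩ := hedge e he
    refine ⟨_, _, rfl, g n, τ (2 * k + 1), τ (2 * k + 1 + 1), hg n, hτ (Nat.le_succ _),
      ?_, ?_, ?_⟩
    · rcases Nat.eq_zero_or_pos k with rfl | hk0
      · rw [hnode0]; exact hstart n
      · rw [hBnode n k hk0 (by omega)]
        exact ⟨_, ⟨hτ (Nat.le_succ _), le_rfl⟩, rfl⟩
    · rw [hBnode n (k + 1) (by omega) (by omega)]
      exact ⟨_, ⟨le_rfl, hτ (Nat.le_succ _)⟩, rfl⟩
    · intro x hx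
      exact ⟨n, k, hk, rfl, hx⟩
  · rintro (_ | ⟨n, i⟩) (_ | ⟨m, j⟩) hne x hx y hy
    · exact absurd rfl hne
    · have := j.2
      exact hU m (2 * (j + 1)) (by omega) (by omega) x hx y hy
    · rw [dist_comm]
      have := i.2
      exact hU n (2 * (i + 1)) (by omega) (by omega) y hy x hx
    · refine hfar n m (2 * (i + 1)) (2 * (j + 1)) (by omega) (by omega) (by omega) (by omega)
        ?_ x hx y hy
      rintro rfl
      have : (i : ℕ) ≠ j := fun h => hne (by rw [Fin.ext h])
      omega
  · rintro e - e' - hne x ⟨n, k, hk, rfl, hx⟩ y ⟨m, l, hl, rfl, hy⟩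
    refine hfar n m _ _ (by omega) (by omega) (by omega) (by omega) ?_ x hx y hy
    rintro rfl
    have : k ≠ l := by rintro rfl; exact hne rfl
    omega
  · rintro e - (_ | ⟨m, j⟩) hv x ⟨n, k, hk, rfl, hx⟩ y hy
    · have hk0 : k ≠ 0 := by
        rintro rfl
        exact hv (by rw [hnode0]; exact Sym2.mem_mk_left _ _)
      rw [dist_comm]
      exact hU n _ (by omega) (by omega) y hy x hx
    · refine hfar n m _ (2 * (j + 1)) (by omega) (by omega) (by omega) (by omega) ?_ x hx y hy
      rintro rfl
      rw [← hnode, Sym2.mem_iff, not_or] at hv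
      have h1 : k ≠ j + 1 := fun h => hv.1 (by rw [h])
      have h2 : k + 1 ≠ j + 1 := fun h => hv.2 (by rw [h])
      omega

/-! ### Linking points outside balls -/

/-- `x` and `y` are joined by a rectifiable curve (parametrised as a `1`-Lipschitz map) that stays
outside the closed ball of radius `r` around `o`. -/
def Linked (o : X) (r : ℝ) (x y : X) : Prop :=
  ∃ (g : ℝ → X) (L : ℝ), OneLip g ∧ 0 ≤ L ∧ g 0 = x ∧ g L = y ∧
    ∀ t ∈ Set.Icc 0 L, r < dist o (g t)

lemma Linked.symm {o : X} {r : ℝ} {x y : X} (h : Linked o r x y) : Linked o r y x := by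
  obtain ⟨g, L, hg, hL, h0, h1, hr⟩ := h
  refine ⟨fun t => g (L - t), L, ?_, hL, by simpa, by simpa, ?_⟩
  · intro s t
    refine (hg _ _).trans ?_
    rw [sub_sub_sub_cancel_left, abs_sub_comm]
  · rintro t ⟨ht0, ht1⟩
    exact hr _ ⟨by linarith, by linarith⟩

lemma Linked.trans {o : X} {r : ℝ} {x y z : X} (h : Linked o r x y) (h' : Linked o r y z) :
    Linked o r x z := by
  obtain ⟨g, L, hg, hL, h0, h1, hr⟩ := h
  obtain ⟨g', L', hg', hL', h0', h1', hr'⟩ := h'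
  refine ⟨_, L + L', hg.glue hg' (h1.trans h0'.symm), by linarith, by simpa [hL], ?_, ?_⟩
  · split_ifs with hc
    · have : L' = 0 := by linarith
      subst this
      rw [add_zero, h1, ← h1', h0']
    · rw [← h1']; congr 1; ring
  · rintro t ⟨ht0, ht1⟩
    split_ifs with hc
    · exact hr _ ⟨ht0, hc⟩
    · exact hr' _ ⟨by linarith, by linarith⟩

/-- Two points at distance less than `K` from each other and outside the ball of radius
`r + K / 2` are linked outside the ball of radius `r`: every point of a curve of length less than
`K` is within `K / 2` of one of its ends. -/
lemma Linked.of_dist_lt (hX : IsLengthSpace X) {o : X} {r K : ℝ} {x y : X}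
    (hx : r + K / 2 ≤ dist o x) (hy : r + K / 2 ≤ dist o y) (hxy : dist x y < K) :
    Linked o r x y := by
  obtain ⟨g, L, hg, hL, hLd, h0, h1⟩ := exists_oneLip hX x y (ε := (K - dist x y) / 2)
    (by linarith)
  refine ⟨g, L, hg, hL, h0, h1, ?_⟩
  rintro t ⟨ht0, ht1⟩
  have hLK : L < K := by linarith
  rcases le_total t (L / 2) with ht | ht
  · have h2 := hg t 0
    rw [h0, sub_zero, abs_of_nonneg ht0] at h2
    linarith [dist_triangle o (g t) x]
  · have h2 := hg t L
    rw [h1, abs_of_nonpos (by linarith)] at h2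
    linarith [dist_triangle o (g t) y]

/-- The points linked to `x` outside the closed ball of radius `r` around `o` form an unbounded
set. -/
def Unb (o : X) (r : ℝ) (x : X) : Prop := ∀ R : ℝ, ∃ y, Linked o r x y ∧ R < dist o y

lemma isConnected_ball (hX : IsLengthSpace X) (o : X) {r : ℝ} (hr : 0 < r) :
    IsConnected (Metric.ball o r) := by
  refine ⟨⟨o, Metric.mem_ball_self hr⟩, ?_⟩
  refine isPreconnected_of_forall o fun y hy => ?_
  rw [Metric.mem_ball'] at hy
  obtain ⟨g, L, hg, hL, hLd, h0, h1⟩ := exists_oneLip hX o y (ε := (r - dist o y) / 2)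
    (by linarith)
  refine ⟨g '' Set.Icc 0 L, ?_, ⟨0, ⟨le_rfl, hL⟩, h0⟩, ⟨L, ⟨hL, le_rfl⟩, h1⟩,
    (hg.isConnected_image hL).isPreconnected⟩
  rintro _ ⟨t, ht, rfl⟩
  have h2 := hg t 0
  rw [h0, sub_zero, abs_of_nonneg ht.1] at h2
  rw [Metric.mem_ball]
  linarith [ht.2]

/-! ### The two cases -/

/-- If every unbounded component outside a ball contains an unbounded component outside each larger
ball, then there is a fat ray. It is built from curves joining points of nested unbounded
components, each radius being chosen after the second last curve so as to clear it by `K`. -/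
lemma ray_case {K : ℝ} (hK : 0 < K) (o x₀ : X) (r₀ : ℝ) (h₀ : Unb o r₀ x₀)
    (hstep : ∀ r x r', Unb o r x → r < r' → ∃ y, Linked o r x y ∧ Unb o r' y) :
    HasMetricFatMinor rayGraph X K := by
  -- A state `(r, x, M)` consists of a radius `r`, a point `x` in an unbounded component outside
  -- that radius, and a bound `M` on the distance from `o` of the preceding curve.
  have step : ∀ q : {q : ℝ × X × ℝ // Unb o q.1 q.2.1}, ∃ q' : {q : ℝ × X × ℝ // Unb o q.1 q.2.1},
      q.1.1 ≤ q'.1.1 ∧ q.1.2.2 + K ≤ q'.1.1 ∧ ∃ (g : ℝ → X) (L : ℝ), OneLip g ∧ 0 ≤ L ∧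
        g 0 = q.1.2.1 ∧ g L = q'.1.2.1 ∧
        ∀ t ∈ Set.Icc 0 L, q.1.1 < dist o (g t) ∧ dist o (g t) ≤ q'.1.2.2 := by
    rintro ⟨⟨r, x, M⟩, hq⟩
    obtain ⟨y, ⟨g, L, hg, hL, h0, h1, hr⟩, hy⟩ := hstep r x (max r (M + K) + 1) hq
      (lt_of_le_of_lt (le_max_left _ _) (lt_add_one _))
    refine ⟨⟨⟨max r (M + K) + 1, y, dist o x + L⟩, hy⟩, ?_, ?_, g, L, hg, hL, h0, h1, ?_⟩
    · exact (le_max_left _ _).trans (lt_add_one _).le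
    · exact (le_max_right _ _).trans (lt_add_one _).le
    · intro t ht
      refine ⟨hr t ht, ?_⟩
      have h2 := hg 0 t
      rw [h0, zero_sub, abs_neg, abs_of_nonneg ht.1] at h2
      change dist o (g t) ≤ dist o x + L
      linarith [dist_triangle o x (g t), ht.2]
  choose next h1 h2 g L hg hL hg0 hgL hr using step
  let q : ℕ → {q : ℝ × X × ℝ // Unb o q.1 q.2.1} := fun n => next^[n] ⟨⟨r₀, x₀, 0⟩, h₀⟩
  have hq : ∀ n, q (n + 1) = next (q n) := fun n => Function.iterate_succ_apply' _ _ _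
  have hmono : Monotone fun n => (q n).1.1 := monotone_nat_of_le_succ fun n => by
    simp only [hq]; exact h1 _
  refine hasMetricFatMinor_ray hK (fun n => g (q n)) (fun n => L (q n)) (fun n => hg _)
    (fun n => hL _) (fun n => ?_) ?_
  · rw [hgL, hg0, hq]
  · rintro k l hkl _ ⟨s, hs, rfl⟩ _ ⟨t, ht, rfl⟩
    have a1 := (hr (q k) s hs).2
    have a2 := (hr (q l) t ht).1
    have a3 := h2 (q (k + 1))
    rw [← hq, hq k] at a3
    have a4 : (q (k + 2)).1.1 ≤ (q l).1.1 := hmono hkl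
    rw [hq (k + 1), hq k] at a4
    rw [hq (k + 1), hq k] at a3
    have a5 := dist_triangle o (g (q k) s) (g (q l) t)
    linarith

/-- If some unbounded component outside one ball only contains bounded components outside the ball
of radius `r'`, then there is a fat `∨Pₙ`. Points `y n` of rapidly increasing distance from `o` lie in
different components outside the ball of radius `r'`; the legs are almost shortest curves from `o`
to `y n`, from the moment they are safely outside this ball. Distinct legs are `K`-far apart by
`Linked.of_dist_lt`, and within a leg the distance from `o` grows with the parameter up to an
error `1`. -/
lemma vee_case (hX : IsLengthSpace X) {K : ℝ} (hK : 0 < K) (o x : X) (r r' : ℝ) (hr' : 0 ≤ r')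
    (hx : Unb o r x) (hno : ∀ y, Linked o r x y → ¬ Unb o r' y) :
    HasMetricFatMinor veeGraph X K := by
  set ρ := r' + K with hρ
  -- Two points of a leg whose parameters differ by `T` have distances from `o` differing by at
  -- least `T - 1`, and `T = K + 2` also separates the centre, of radius `ρ + 2`, from `τ 2 = ρ + 1 + T`
  -- up to that error: `(τ 2 - 1) - (ρ + 2) = K`.
  set T := K + 2 with hT
  let τ : ℕ → ℝ := fun k => ρ + 1 + (k - 1) * T
  have hT0 : 0 < T := by linarith
  have hτ : Monotone τ := fun a b hab => by
    have : (a : ℝ) ≤ b := by exact_mod_cast hab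
    simp only [τ]
    gcongr
  have hτ1 : τ 1 = ρ + 1 := by simp [τ]
  have hτs : ∀ k, τ (k + 1) = τ k + T := fun k => by simp only [τ]; push_cast; ring
  have step : ∀ (M : ℝ), ∃ (y : X) (M' : ℝ), M < dist o y ∧ M ≤ M' ∧
      ∀ z, Linked o r' y z → dist o z ≤ M' := by
    intro M
    obtain ⟨y, hy, hMy⟩ := hx M
    have := hno y hy
    simp only [Unb, not_forall, not_exists, not_and, not_lt] at this
    obtain ⟨M', hM'⟩ := this
    exact ⟨y, max M M', hMy, le_max_left _ _, fun z hz => (hM' z hz).trans (le_max_right _ _)⟩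
  choose Y N hY hN hYN using step
  -- `M n` bounds the distance from `o` on the components of all previously chosen points.
  let M : ℕ → ℝ := fun n => Nat.rec 0 (fun n m => N (max m (τ (2 * n + 3)))) n
  have hM : ∀ n, M (n + 1) = N (max (M n) (τ (2 * n + 3))) := fun n => rfl
  let y : ℕ → X := fun n => Y (max (M n) (τ (2 * n + 3)))
  have hMmono : Monotone M := monotone_nat_of_le_succ fun n => by
    rw [hM]; exact (le_max_left _ _).trans (hN _)
  have hy1 : ∀ n, M n < dist o (y n) := fun n => (le_max_left _ _).trans_lt (hY _)
  have hy2 : ∀ n, τ (2 * n + 3) < dist o (y n) := fun n => (le_max_right _ _).trans_lt (hY _)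
  have hy3 : ∀ n z, Linked o r' (y n) z → dist o z ≤ M (n + 1) := fun n z hz => hYN _ z hz
  have hcurve : ∀ n, ∃ (g : ℝ → X) (L : ℝ), OneLip g ∧ 0 ≤ L ∧ L ≤ dist o (y n) + 1 ∧
    g 0 = o ∧ g L = y n := fun n => exists_oneLip hX o (y n) one_pos
  choose g L hg hL0 hL hg0 hgL using hcurve
  have hLτ : ∀ n, τ (2 * n + 3) ≤ L n := by
    intro n
    have h1 := hg n 0 (L n)
    rw [hg0, hgL, zero_sub, abs_neg, abs_of_nonneg (hL0 n)] at h1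
    linarith [hy2 n]
  have hup : ∀ n t, 0 ≤ t → dist o (g n t) ≤ t := by
    intro n t ht
    have h1 := hg n 0 t
    rwa [hg0, zero_sub, abs_neg, abs_of_nonneg ht] at h1
  have hlow : ∀ n t, t ≤ L n → t - 1 ≤ dist o (g n t) := by
    intro n t ht
    have h1 := hg n t (L n)
    rw [hgL, abs_of_nonpos (by linarith)] at h1
    linarith [dist_triangle o (g n t) (y n), hL n]
  have hlink : ∀ n t, ρ + 1 ≤ t → t ≤ L n → Linked o r' (g n t) (y n) := by
    intro n t ht htL
    refine ⟨fun s => g n (s + t), L n - t, (hg n).shift t, by linarith, by simp,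
      by simp [hgL], ?_⟩
    rintro s ⟨hs0, hs1⟩
    have := hlow n (s + t) (by linarith)
    linarith
  have hτge : ∀ k, 1 ≤ k → ρ + 1 ≤ τ k := fun k hk => hτ1 ▸ hτ hk
  have hrange : ∀ n k, 1 ≤ k → k ≤ 2 * n + 2 → ∀ t ∈ Set.Icc (τ k) (τ (k + 1)),
      ρ + 1 ≤ t ∧ t ≤ L n := by
    intro n k hk hk' t ht
    refine ⟨(hτge k hk).trans ht.1, ht.2.trans ((hτ ?_).trans (hLτ n))⟩
    omega
  have hlegs : ∀ n m s t, n < m → ρ + 1 ≤ s → s ≤ L n → ρ + 1 ≤ t → t ≤ L m →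
      K ≤ dist (g n s) (g m t) := by
    intro n m s t hnm hs hs' ht ht'
    by_contra hcon
    have h1 : Linked o r' (g n s) (g m t) := by
      refine Linked.of_dist_lt hX (K := K) ?_ ?_ (not_le.1 hcon)
      · linarith [hlow n s hs']
      · linarith [hlow m t ht']
    have h2 := ((hlink n s hs hs').symm.trans h1).trans (hlink m t ht ht')
    have h3 := hy3 n _ h2
    have h4 : M (n + 1) ≤ M m := hMmono hnm
    linarith [hy1 m]
  refine hasMetricFatMinor_vee hK (closure (Metric.ball o (ρ + 2)))
    (isConnected_ball hX o (by linarith)).closure isClosed_closure g τ hτ hg ?_ ?_ ?_ ?_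
  · intro n
    refine subset_closure ?_
    rw [Metric.mem_ball', hτ1]
    linarith [hup n (ρ + 1) (by linarith)]
  · rintro n k hk hk' u hu _ ⟨t, ht, rfl⟩
    have h1 : dist u o ≤ ρ + 2 := Metric.closure_ball_subset_closedBall hu
    have h2 := hlow n t (hrange n k (by omega) hk' t ht).2
    have h3 : τ 2 ≤ τ k := hτ hk
    rw [hτs 1, hτ1] at h3
    have h4 := dist_triangle o u (g n t)
    rw [dist_comm o u] at h4
    linarith [ht.1]
  · rintro n k l hk hkl hl _ ⟨s, hs, rfl⟩ _ ⟨t, ht, rfl⟩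
    have h1 := hup n s (by linarith [(hrange n k hk (by omega) s hs).1])
    have h2 := hlow n t (hrange n l (by omega) hl t ht).2
    have h3 : τ (k + 2) ≤ τ l := hτ hkl
    rw [hτs (k + 1)] at h3
    have h4 := dist_triangle o (g n s) (g n t)
    linarith [ht.1, hs.2]
  · rintro n m k l hnm hk hk' hl hl' _ ⟨s, hs, rfl⟩ _ ⟨t, ht, rfl⟩
    have h1 := hrange n k hk hk' s hs
    have h2 := hrange m l hl hl' t ht
    exact hlegs n m s t hnm h1.1 h1.2 h2.1 h2.2

end

/-- Coarse König theorem: a (connected) length space of infinite diameter has either the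
ray or `∨Pₙ` as an asymptotic minor. -/
theorem coarse_Konig
    {X : Type} [MetricSpace X] (hX : IsLengthSpace X)
    (hdiam : ∀ R : ℝ, ∃ x y : X, R < dist x y) :
    HasAsymptoticMinor rayGraph X ∨ HasAsymptoticMinor veeGraph X := by
  -- An unbounded component outside a ball of radius `r` that splits into bounded components
  -- outside some larger ball yields `∨Pₙ`; if this never happens, there is a ray.
  obtain ⟨o, -, -⟩ := hdiam 0
  have hfar : ∀ R : ℝ, ∃ y : X, R < dist o y := by
    intro R
    obtain ⟨x, y, hxy⟩ := hdiam (2 * R)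
    by_contra! hcon
    have := dist_triangle_left x y o
    linarith [hcon x, hcon y]
  have hbase : Unb o (-1) o := by
    intro R
    obtain ⟨y, hy⟩ := hfar R
    obtain ⟨g, L, hg, hL, -, h0, h1⟩ := exists_oneLip hX o y one_pos
    exact ⟨y, ⟨g, L, hg, hL, h0, h1, fun t _ => by linarith [dist_nonneg (x := o) (y := g t)]⟩, hy⟩
  by_cases hstep : ∀ r x r', Unb o r x → r < r' → ∃ y, Linked o r x y ∧ Unb o r' y
  · exact Or.inl fun K hK => ray_case hK o o (-1) hbase hstep
  · push Not at hstep
    obtain ⟨r, x, r', hx, -, hno⟩ := hstep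
    refine Or.inr fun K hK => vee_case hX hK o x r (max r' 0) (le_max_right _ _) hx ?_
    intro y hy hunb
    refine hno y hy fun R => ?_
    obtain ⟨z, ⟨g, L, hg, hL, h0, h1, hr⟩, hz⟩ := hunb R
    exact ⟨z, ⟨g, L, hg, hL, h0, h1, fun t ht => (le_max_left _ _).trans_lt (hr t ht)⟩, hz⟩
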